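/- Let p ≥ 10^7 be a prime, let χ be a non-principal Dirichlet character modulo p, and let u be a prime with u ≥ e²·log p. Then there exists a positive integer n with gcd(n,u) = 1, χ(n) ≠ 1, and n < 11.0421·p^{1/4}·log p. -/

import Mathlib

/-!
If `χ n = 1` for every small `n` prime to `u`, then all such `n` satisfy `n ^ d = 1` modulo `p`,
where `d` is the order of the kernel of `χ`, a divisor of `p - 1` with cofactor `k ≥ 2`. Hence many
fractions `x = n / q` modulo `p` have all of `x + 1, …, x + h` of order dividing `d`, with `k ^ h`
of size about `√p`.

Stepanov's method bounds the number of such `x`. Linear algebra yields coefficients `a j e`, not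
all zero and of degree less than `A`, such that
`∑ j e, (X ^ q) ^ j * a j e * ∏ s, (X + s) ^ (d * e s)`, with `0 ≤ e s < k`, vanishes to order `M`
at each `x`, since there `X ^ q` takes the value `x` and the products the value `1`, also in the
formulas for the derivatives. This polynomial is nonzero: modulo `X ^ q` it suffices to see that the
products are independent over polynomials of low degree. Multiplication by a combination of the
products is a matrix over `K[X]` whose determinant is nonzero, because the radicals
`(X + s) ^ (1 / k)` are independent by Kummer theory, while the congruence
`(X + s) ^ q ≡ s` forces this determinant, of degree less than `q`, to be divisible by `X ^ q`.
-/

section Kummer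

variable {F Ω ι : Type*} [Field F] [Field Ω] [Algebra F Ω] [IsGalois F Ω] {u : ι → Ω}

theorem linearIndependent_of_galois_eigenvectors (hu : ∀ i, u i ≠ 0)
    (heigen : ∀ i (σ : Gal(Ω/F)), ∃ c : F, σ (u i) = c • u i)
    (hne : Pairwise fun i j ↦ ∀ c : F, u i ≠ c • u j) :
    LinearIndependent F u := by
  let character (i : ι) : Gal(Ω/F) →* Ω :=
    { toFun := fun σ ↦ σ (u i) / u i
      map_one' := div_self (hu i)
      map_mul' := fun σ τ ↦ by
        obtain ⟨c, hc⟩ := heigen i τ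
        rw [AlgEquiv.mul_apply, hc, map_smul, smul_div_assoc, smul_div_assoc, div_self (hu i),
          mul_smul_comm, mul_one] }
  have character_injective : Function.Injective character := by
    intro i j hij
    by_contra hij'
    have ratio_fixed (σ : Gal(Ω/F)) : σ (u i / u j) = u i / u j := by
      have hσ : σ (u i) / u i = σ (u j) / u j := DFunLike.congr_fun hij σ
      have hσj : σ (u j) ≠ 0 := by simpa using hu j
      rw [div_eq_div_iff (hu i) (hu j)] at hσ
      rw [map_div₀, div_eq_div_iff hσj (hu j), hσ, mul_comm]
    obtain ⟨c, hc⟩ :=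
      (InfiniteGalois.mem_range_algebraMap_iff_fixed (k := F) (K := Ω) _).2 ratio_fixed
    exact hne hij' c (by rw [Algebra.smul_def, hc, div_mul_cancel₀ _ (hu j)])
  have independent := (linearIndependent_monoidHom Gal(Ω/F) Ω).comp character character_injective
  rw [linearIndependent_iff'] at independent ⊢
  intro s g hg i hi
  have relation : ∑ j ∈ s, (g j • u j) • (character j : Gal(Ω/F) → Ω) = 0 := by
    funext σ
    calc (∑ j ∈ s, (g j • u j) • (character j : Gal(Ω/F) → Ω)) σ
        = ∑ j ∈ s, σ (g j • u j) := by
          rw [Finset.sum_apply]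
          refine Finset.sum_congr rfl fun j _ ↦ ?_
          change g j • u j * (σ (u j) / u j) = _
          rw [map_smul, smul_mul_assoc, mul_div_cancel₀ _ (hu j)]
      _ = 0 := by rw [← map_sum, hg, map_zero]
  exact (smul_eq_zero.1 (independent s _ relation i hi)).resolve_right (hu i)

theorem linearIndependent_of_pow_mem_range {k : ℕ} [NeZero k] {ζ : F} (hζ : IsPrimitiveRoot ζ k)
    (hu : ∀ i, u i ≠ 0) (hpow : ∀ i, u i ^ k ∈ (algebraMap F Ω).range)
    (hne : Pairwise fun i j ↦ ∀ c : F, u i ≠ c • u j) :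
    LinearIndependent F u := by
  refine linearIndependent_of_galois_eigenvectors hu (fun i σ ↦ ?_) hne
  obtain ⟨b, hb⟩ := hpow i
  have ratio_pow : (σ (u i) / u i) ^ k = 1 := by
    rw [div_pow, ← map_pow, ← hb, AlgEquiv.commutes, hb, div_self (pow_ne_zero _ (hu i))]
  obtain ⟨j, -, hj⟩ :=
    (hζ.map_of_injective (algebraMap F Ω).injective).eq_pow_of_pow_eq_one ratio_pow
  exact ⟨ζ ^ j, by rw [Algebra.smul_def, map_pow, hj, div_mul_cancel₀ _ (hu i)]⟩

end Kummer

/-- The monomial `∏ t_s ^ e_s` with all exponents in `{0, …, k - 1}`. These monomials are the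
standard basis of the `R`-algebra generated by `k`-th roots `t_s` of independent elements. -/
def boxMonomial {I S : Type*} [Fintype I] [CommMonoid S] {k : ℕ} (t : I → S) (e : I → Fin k) : S :=
  ∏ s, t s ^ (e s : ℕ)

section boxMonomial

variable {I : Type*} [Fintype I] {k : ℕ}

theorem map_boxMonomial {S T Φ : Type*} [CommMonoid S] [CommMonoid T] [FunLike Φ S T]
    [MonoidHomClass Φ S T] (φ : Φ) (t : I → S) (e : I → Fin k) :
    φ (boxMonomial t e) = boxMonomial (fun s ↦ φ (t s)) e := by
  simp only [boxMonomial, map_prod, map_pow]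

theorem boxMonomial_pow {S : Type*} [CommMonoid S] (t : I → S) (e : I → Fin k) (n : ℕ) :
    boxMonomial t e ^ n = boxMonomial (fun s ↦ t s ^ n) e := by
  simp only [boxMonomial, ← Finset.prod_pow, pow_right_comm]

theorem boxMonomial_mul_boxMonomial_rev {S : Type*} [CommMonoid S] {w t : I → S}
    (h : ∀ s, t s * w s = 1) (e : I → Fin k) :
    boxMonomial w e * ∏ s, t s ^ (k - 1) = boxMonomial t fun s ↦ (e s).rev := by
  rw [boxMonomial, boxMonomial, ← Finset.prod_mul_distrib]
  refine Finset.prod_congr rfl fun s _ ↦ ?_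
  have split : k - 1 = (e s : ℕ) + ((e s).rev : ℕ) := by rw [Fin.val_rev]; omega
  rw [split, pow_add, ← mul_assoc, ← mul_pow, mul_comm (w s), h, one_pow, one_mul]

theorem boxMonomial_ne_zero {S : Type*} [CommMonoidWithZero S] [NoZeroDivisors S] [Nontrivial S]
    {t : I → S} (ht : ∀ s, t s ≠ 0) (e : I → Fin k) : boxMonomial t e ≠ 0 :=
  Finset.prod_ne_zero_iff.2 fun s _ ↦ pow_ne_zero _ (ht s)

theorem emultiplicity_boxMonomial {R : Type*} [CommMonoidWithZero R] [IsCancelMulZero R]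
    {r : I → R} (hr : ∀ s, Prime (r s)) (hndvd : Pairwise fun s t ↦ ¬ r s ∣ r t)
    (e : I → Fin k) (s : I) :
    emultiplicity (r s) (boxMonomial r e) = (e s : ℕ) := by
  rw [boxMonomial, Finset.emultiplicity_prod (hr s), Finset.sum_eq_single s]
  · exact emultiplicity_pow_self_of_prime (hr s) _
  · intro t _ hts
    rw [emultiplicity_pow (hr s), emultiplicity_eq_zero.2 (hndvd hts.symm), mul_zero]
  · simp

theorem eq_of_pow_mul_boxMonomial_eq {R : Type*} [CommMonoidWithZero R] [IsCancelMulZero R]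
    [WfDvdMonoid R] {r : I → R} (hr : ∀ s, Prime (r s))
    (hndvd : Pairwise fun s t ↦ ¬ r s ∣ r t) {a b : R} (ha : a ≠ 0) (hb : b ≠ 0) {e f : I → Fin k}
    (h : a ^ k * boxMonomial r e = b ^ k * boxMonomial r f) : e = f := by
  funext s
  have hfin {x : R} (hx : x ≠ 0) : FiniteMultiplicity (r s) x :=
    FiniteMultiplicity.of_not_isUnit (hr s).not_isUnit hx
  have exponents := congrArg (emultiplicity (r s)) h
  rw [emultiplicity_mul (hr s), emultiplicity_mul (hr s), emultiplicity_pow (hr s),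
    emultiplicity_pow (hr s), emultiplicity_boxMonomial hr hndvd,
    emultiplicity_boxMonomial hr hndvd, (hfin ha).emultiplicity_eq_multiplicity,
    (hfin hb).emultiplicity_eq_multiplicity] at exponents
  have residues := congrArg (· % k) (show k * multiplicity (r s) a + e s =
    k * multiplicity (r s) b + f s by exact_mod_cast exponents)
  simp only [Nat.mul_add_mod, Nat.mod_eq_of_lt (e s).2, Nat.mod_eq_of_lt (f s).2] at residues
  exact Fin.ext residues

theorem linearIndependent_boxMonomial_of_prime {R : Type*} [CommRing R] [IsDomain R]
    [WfDvdMonoid R] [NeZero k] {ζ : R} (hζ : IsPrimitiveRoot ζ k) {r : I → R}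
    (hr : ∀ s, Prime (r s)) (hndvd : Pairwise fun s t ↦ ¬ r s ∣ r t) {Ω : Type*} [Field Ω]
    [Algebra R Ω] [Algebra (FractionRing R) Ω] [IsScalarTower R (FractionRing R) Ω]
    [IsGalois (FractionRing R) Ω] {t : I → Ω} (ht : ∀ s, t s ^ k = algebraMap R Ω (r s)) :
    LinearIndependent R (fun e : I → Fin k ↦ boxMonomial t e) := by
  let F := FractionRing R
  have hR : Function.Injective (algebraMap R F) := IsFractionRing.injective R F
  have hΩ : Function.Injective (algebraMap R Ω) := by
    rw [IsScalarTower.algebraMap_eq R F Ω]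
    exact (algebraMap F Ω).injective.comp hR
  have ht0 (s : I) : t s ≠ 0 := by
    intro hs
    have := ht s
    rw [hs, zero_pow (NeZero.ne k), eq_comm, map_eq_zero_iff _ hΩ] at this
    exact (hr s).ne_zero this
  have monomial_pow (e : I → Fin k) : boxMonomial t e ^ k = algebraMap R Ω (boxMonomial r e) := by
    simp only [boxMonomial_pow, map_boxMonomial, ht]
  rw [LinearIndependent.iff_fractionRing R F]
  refine linearIndependent_of_pow_mem_range (hζ.map_of_injective hR) (boxMonomial_ne_zero ht0)
    (fun e ↦ ⟨algebraMap R F (boxMonomial r e), ?_⟩) fun e f hef c hc ↦ hef ?_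
  · rw [monomial_pow, ← IsScalarTower.algebraMap_apply]
  obtain ⟨a, b, hb, rfl⟩ := IsFractionRing.div_surjective (A := R) c
  have hb0 : algebraMap R Ω b ≠ 0 :=
    (map_ne_zero_iff _ hΩ).2 (nonZeroDivisors.ne_zero hb)
  have cleared : algebraMap R Ω b * boxMonomial t e = algebraMap R Ω a * boxMonomial t f := by
    rw [hc, Algebra.smul_def, map_div₀, ← IsScalarTower.algebraMap_apply,
      ← IsScalarTower.algebraMap_apply, ← mul_assoc, mul_div_cancel₀ _ hb0]
  have ha : a ≠ 0 := by
    rintro rfl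
    rw [map_zero, zero_mul] at cleared
    exact mul_ne_zero hb0 (boxMonomial_ne_zero ht0 e) cleared
  refine eq_of_pow_mul_boxMonomial_eq hr hndvd (nonZeroDivisors.ne_zero hb) ha (hΩ ?_)
  rw [map_mul, map_mul, map_pow, map_pow, ← monomial_pow, ← monomial_pow, ← mul_pow, ← mul_pow,
    cleared]

end boxMonomial

section RadicalMulMatrix

variable {I R S : Type*} [Fintype I] [CommRing R] [CommRing S] [Algebra R S] {k : ℕ} [NeZero k]
  [DecidableEq I]

/-- The matrix of multiplication by `∑ e, a e • T ^ e` in the basis of box monomials of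
`R[T_s : s ∈ I] / (T_s ^ k - r_s)`: the row of `f` lists the coordinates of the product with
`T ^ f`. Exponents are added in `Fin k`, and each carry in the variable `s` contributes a factor
`r_s`. -/
def radicalMulMatrix (r : I → R) (a : (I → Fin k) → R) : Matrix (I → Fin k) (I → Fin k) R :=
  .of fun f g ↦ a (g - f) * ∏ s, if k ≤ ((g - f) s : ℕ) + (f s : ℕ) then r s else 1

theorem sum_radicalMulMatrix_smul_boxMonomial {r : I → R} {t : I → S}
    (ht : ∀ s, t s ^ k = algebraMap R S (r s)) (a : (I → Fin k) → R) (f : I → Fin k) :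
    ∑ g, radicalMulMatrix r a f g • boxMonomial t g =
      (∑ e, a e • boxMonomial t e) * boxMonomial t f := by
  have carry (e : I → Fin k) (s : I) :
      (if k ≤ (e s : ℕ) + (f s : ℕ) then algebraMap R S (r s) else 1) * t s ^ ((e + f) s : ℕ) =
        t s ^ (e s : ℕ) * t s ^ (f s : ℕ) := by
    rw [Pi.add_apply, ← pow_add, Fin.val_add_eq_ite]
    split_ifs with h
    · rw [← ht s, ← pow_add, Nat.add_sub_cancel' h]
    · rw [one_mul]
  rw [← Equiv.sum_comp (Equiv.addRight f), Finset.sum_mul]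
  refine Finset.sum_congr rfl fun e _ ↦ ?_
  simp only [Equiv.coe_addRight, radicalMulMatrix, Matrix.of_apply, add_sub_cancel_right,
    Algebra.smul_def, map_mul, map_prod, apply_ite (algebraMap R S), map_one, boxMonomial]
  rw [mul_assoc, mul_assoc, ← Finset.prod_mul_distrib, ← Finset.prod_mul_distrib]
  simp only [carry]

theorem radicalMulMatrix_det_ne_zero_of_linearIndependent [IsDomain R] [IsDomain S]
    {r : I → R} {t : I → S} (ht : ∀ s, t s ^ k = algebraMap R S (r s))
    (hli : LinearIndependent R fun e : I → Fin k ↦ boxMonomial t e)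
    {a : (I → Fin k) → R} (ha : a ≠ 0) : (radicalMulMatrix r a).det ≠ 0 := by
  intro hdet
  obtain ⟨v, hv, hvM⟩ := Matrix.exists_vecMul_eq_zero_iff.2 hdet
  have eq_zero {b : (I → Fin k) → R} (hb : ∑ e, b e • boxMonomial t e = 0) : b = 0 :=
    funext (Fintype.linearIndependent_iff.1 hli b hb)
  have product_eq_zero :
      (∑ e, a e • boxMonomial t e) * ∑ f, v f • boxMonomial t f = 0 := by
    calc (∑ e, a e • boxMonomial t e) * ∑ f, v f • boxMonomial t f
        = ∑ f, ∑ g, (v f * radicalMulMatrix r a f g) • boxMonomial t g := by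
          rw [Finset.mul_sum]
          refine Finset.sum_congr rfl fun f _ ↦ ?_
          rw [mul_smul_comm, ← sum_radicalMulMatrix_smul_boxMonomial ht, Finset.smul_sum]
          simp only [smul_smul]
      _ = ∑ g, (Matrix.vecMul v (radicalMulMatrix r a)) g • boxMonomial t g := by
          rw [Finset.sum_comm]
          simp only [Matrix.vecMul, dotProduct, Finset.sum_smul]
      _ = 0 := by simp only [hvM, Pi.zero_apply, zero_smul, Finset.sum_const_zero]
  rcases mul_eq_zero.1 product_eq_zero with h | h
  · exact ha (eq_zero h)
  · exact hv (eq_zero h)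

theorem radicalMulMatrix_det_ne_zero_of_prime [IsDomain R] [WfDvdMonoid R]
    {ζ : R} (hζ : IsPrimitiveRoot ζ k) {r : I → R} (hr : ∀ s, Prime (r s))
    (hndvd : Pairwise fun s t ↦ ¬ r s ∣ r t) {a : (I → Fin k) → R} (ha : a ≠ 0) :
    (radicalMulMatrix r a).det ≠ 0 := by
  let F := FractionRing R
  let Ω := SeparableClosure F
  have : NeZero (k : F) := (hζ.map_of_injective (IsFractionRing.injective R F)).neZero'
  have : NeZero (k : Ω) := .of_injective (algebraMap F Ω).injective
  choose t ht using fun s ↦ IsSepClosed.exists_pow_nat_eq (algebraMap R Ω (r s)) k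
  exact radicalMulMatrix_det_ne_zero_of_linearIndependent ht
    (linearIndependent_boxMonomial_of_prime hζ hr hndvd ht) ha

theorem algebraMap_radicalMulMatrix_det_eq_zero {r : I → R} {t : I → S}
    (ht : ∀ s, t s ^ k = algebraMap R S (r s)) {a : (I → Fin k) → R}
    (ha : ∑ e, a e • boxMonomial t e = 0) : algebraMap R S (radicalMulMatrix r a).det = 0 := by
  let M := (radicalMulMatrix r a).map (algebraMap R S)
  have kernel : M.mulVec (fun g ↦ boxMonomial t g) = 0 := by
    funext f
    have := sum_radicalMulMatrix_smul_boxMonomial ht a f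
    rw [ha, zero_mul] at this
    simpa only [M, Matrix.mulVec, dotProduct, Matrix.map_apply, Algebra.smul_def,
      Pi.zero_apply] using this
  have boxMonomial_zero : boxMonomial t (0 : I → Fin k) = 1 := by simp [boxMonomial]
  rw [RingHom.map_det]
  refine Matrix.det_eq_zero_of_mulVec_eq_zero_of_mem_nonZeroDivisors kernel (i := 0) ?_
  rw [boxMonomial_zero]
  exact one_mem _

/-- A relation among the box monomials in `w_s` becomes, after reversing all exponents, a relation
among those in the `k`-th roots `w_s⁻¹` of `r_s`. -/
theorem algebraMap_radicalMulMatrix_rev_det_eq_zero {r : I → R} {w : I → S}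
    (hw : ∀ s, w s ^ k * algebraMap R S (r s) = 1) {a : (I → Fin k) → R}
    (ha : ∑ e, a e • boxMonomial w e = 0) :
    algebraMap R S (radicalMulMatrix r fun e ↦ a fun s ↦ (e s).rev).det = 0 := by
  let t (s : I) : S := w s ^ (k - 1) * algebraMap R S (r s)
  have t_mul_w (s : I) : t s * w s = 1 := by
    rw [mul_right_comm, pow_sub_one_mul (NeZero.ne k), hw]
  have t_pow (s : I) : t s ^ k = algebraMap R S (r s) := by
    rw [← one_mul (t s ^ k), ← hw s, mul_right_comm, ← mul_pow, mul_comm (w s), t_mul_w,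
      one_pow, one_mul]
  refine algebraMap_radicalMulMatrix_det_eq_zero t_pow ?_
  let reversal : (I → Fin k) ≃ (I → Fin k) := Equiv.arrowCongr (.refl I) Fin.revPerm
  calc ∑ e, a (fun s ↦ (e s).rev) • boxMonomial t e
      = ∑ e, a e • boxMonomial t fun s ↦ (e s).rev := by
        rw [← Equiv.sum_comp reversal]
        simp [reversal, Equiv.arrowCongr, Function.comp_def]
    _ = (∑ e, a e • boxMonomial w e) * ∏ s, t s ^ (k - 1) := by
        simp only [Finset.sum_mul, smul_mul_assoc, boxMonomial_mul_boxMonomial_rev t_mul_w]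
    _ = 0 := by rw [ha, zero_mul]

end RadicalMulMatrix

section Polynomial

open Polynomial

theorem exists_isPrimitiveRoot_of_dvd_card_sub_one {K : Type*} [Field K] [Fintype K] {k : ℕ}
    (hk : k ∣ Fintype.card K - 1) : ∃ ζ : K, IsPrimitiveRoot ζ k := by
  obtain ⟨g, hg⟩ := IsCyclic.exists_ofOrder_eq_natCard (α := Kˣ)
  obtain ⟨d, hd⟩ := hk
  have hg' : orderOf (g : K) = d * k := by
    rw [orderOf_units, hg, Nat.card_units, Nat.card_eq_fintype_card, hd, mul_comm]
  exact ⟨(g : K) ^ d, (IsPrimitiveRoot.orderOf (g : K)).pow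
    (orderOf_units (y := g) ▸ orderOf_pos g) hg'⟩

theorem natDegree_det_le {R n : Type*} [CommRing R] [Fintype n] [DecidableEq n]
    {M : Matrix n n R[X]} {B : ℕ} (hM : ∀ i j, (M i j).natDegree ≤ B) :
    M.det.natDegree ≤ Fintype.card n * B := by
  rw [Matrix.det_apply]
  refine natDegree_sum_le_of_forall_le _ _ fun σ _ ↦ (natDegree_smul_le _ _).trans ?_
  refine (natDegree_prod_le _ _).trans ((Finset.sum_le_card_nsmul _ _ B fun i _ ↦ hM _ _).trans ?_)
  rw [Finset.card_univ, smul_eq_mul]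

theorem natDegree_radicalMulMatrix_le {R I : Type*} [CommRing R] [Fintype I] {k : ℕ} [NeZero k]
    {r : I → R[X]} (hr : ∀ s, (r s).natDegree ≤ 1) {a : (I → Fin k) → R[X]} {A : ℕ}
    (ha : ∀ e, (a e).natDegree ≤ A) (f g : I → Fin k) :
    (radicalMulMatrix r a f g).natDegree ≤ A + Fintype.card I := by
  rw [radicalMulMatrix, Matrix.of_apply]
  refine natDegree_mul_le.trans (add_le_add (ha _) ?_)
  refine (natDegree_prod_le _ _).trans ((Finset.sum_le_card_nsmul _ _ 1 fun s _ ↦ ?_).trans ?_)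
  · split_ifs
    · exact hr s
    · simp only [natDegree_one, zero_le]
  · rw [Finset.card_univ, smul_eq_mul, mul_one]

variable {K I : Type*} [Field K]

theorem prime_C_mul_X_add_C {a : K} (ha : a ≠ 0) (b : K) : Prime (C a * (X + C b)) := by
  refine prime_of_degree_eq_one ?_
  rw [degree_C_mul ha, degree_X_add_C]

theorem pairwise_not_dvd_C_mul_X_add_C {a σ : I → K} (ha : ∀ s, a s ≠ 0)
    (hσ : Function.Injective σ) :
    Pairwise fun s t ↦ ¬ C (a s) * (X + C (σ s)) ∣ C (a t) * (X + C (σ t)) := by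
  intro s t hst hdvd
  have root := eval_dvd (x := -σ s) hdvd
  simp only [eval_mul, eval_C, eval_add, eval_X, neg_add_cancel, mul_zero, zero_dvd_iff,
    mul_eq_zero, ha t, false_or] at root
  exact hst (hσ (neg_add_eq_zero.1 root))

variable [Fintype K] [Fintype I]

theorem X_add_C_pow_card (σ : K) :
    (X + C σ) ^ Fintype.card K = X ^ Fintype.card K + C σ := by
  rw [← FiniteField.expand_card, map_add, expand_X, expand_C]

/- In `K[X] / (X ^ q)` the element `w = (X + σ) ^ d` satisfies `w ^ k * (X + σ) = X ^ q + σ = σ`, so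
its inverse is a `k`-th root of the prime `σ⁻¹ * (X + σ)`. A relation among the box monomials thus
kills a determinant which is nonzero in `K[X]` and of degree less than `q`. -/
theorem eq_zero_of_X_pow_card_dvd_sum_mul_boxMonomial [DecidableEq I] {k d A : ℕ}
    (hkd : k * d = Fintype.card K - 1) {σ : I → K} (hσ : Function.Injective σ)
    (hσ0 : ∀ s, σ s ≠ 0) (hA : k ^ Fintype.card I * (A + Fintype.card I) < Fintype.card K)
    {a : (I → Fin k) → K[X]} (ha : ∀ e, (a e).natDegree ≤ A)
    (hdvd : X ^ Fintype.card K ∣ ∑ e, a e * boxMonomial (fun s ↦ (X + C (σ s)) ^ d) e) :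
    a = 0 := by
  have one_lt_card := Fintype.one_lt_card (α := K)
  have : NeZero k := ⟨by rintro rfl; omega⟩
  obtain ⟨ζ, hζ⟩ := exists_isPrimitiveRoot_of_dvd_card_sub_one ⟨d, hkd.symm⟩
  let r (s : I) : K[X] := C (σ s)⁻¹ * (X + C (σ s))
  let S := K[X] ⧸ Ideal.span {(X : K[X]) ^ Fintype.card K}
  have algebraMap_eq_zero {f : K[X]} : algebraMap K[X] S f = 0 ↔ X ^ Fintype.card K ∣ f := by
    rw [Ideal.Quotient.algebraMap_eq, Ideal.Quotient.eq_zero_iff_dvd]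
  have pow_mul_r (s : I) : algebraMap K[X] S ((X + C (σ s)) ^ d) ^ k * algebraMap K[X] S (r s) =
      1 := by
    have : (X + C (σ s)) ^ (d * k) * r s = X ^ Fintype.card K * C (σ s)⁻¹ + 1 := by
      rw [mul_left_comm, ← pow_succ, mul_comm d, hkd, Nat.sub_add_cancel one_lt_card.le,
        X_add_C_pow_card, mul_add, ← C_mul, inv_mul_cancel₀ (hσ0 s), C_1, mul_comm]
    rw [← map_pow, ← map_mul, ← pow_mul, this, map_add, map_mul,
      algebraMap_eq_zero.2 dvd_rfl, zero_mul, zero_add, map_one]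
  have relation : ∑ e, a e • boxMonomial (fun s ↦ algebraMap K[X] S ((X + C (σ s)) ^ d)) e = 0 := by
    rw [← algebraMap_eq_zero.2 hdvd, map_sum]
    refine Finset.sum_congr rfl fun e _ ↦ ?_
    rw [map_mul, map_boxMonomial]
    rfl
  have det_eq_zero : (radicalMulMatrix r fun e ↦ a fun s ↦ (e s).rev).det = 0 := by
    refine eq_zero_of_dvd_of_natDegree_lt
      (algebraMap_eq_zero.1 (algebraMap_radicalMulMatrix_rev_det_eq_zero pow_mul_r relation)) ?_
    rw [natDegree_X_pow]
    refine lt_of_le_of_lt (natDegree_det_le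
      (natDegree_radicalMulMatrix_le (fun s ↦ ?_) fun e ↦ ha _)) (by simpa using hA)
    exact (natDegree_C_mul_le _ _).trans (natDegree_X_add_C _).le
  by_contra ha0
  refine radicalMulMatrix_det_ne_zero_of_prime (hζ.map_of_injective C_injective)
    (fun s ↦ prime_C_mul_X_add_C (inv_ne_zero (hσ0 s)) (σ s))
    (pairwise_not_dvd_C_mul_X_add_C (fun s ↦ inv_ne_zero (hσ0 s)) hσ) (fun hrev ↦ ha0 ?_)
    det_eq_zero
  funext e
  simpa only [Fin.rev_rev, Pi.zero_apply] using congrFun hrev fun s ↦ (e s).rev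

end Polynomial

section TwistedDerivative

open Polynomial

variable {R : Type*} [CommRing R]

/-- If `W * w' = V * w`, then `twistedDerivative W V l a` is the cofactor of `w` in the numerator
of the `l`-th derivative of `a * w`: see `iterate_derivative_mul_mul_pow`. -/
noncomputable def twistedDerivative (W V : R[X]) : ℕ → R[X] →ₗ[R] R[X]
  | 0 => LinearMap.id
  | l + 1 => LinearMap.mulLeft R W ∘ₗ derivative ∘ₗ twistedDerivative W V l +
      LinearMap.mulLeft R (V - (l : R[X]) * derivative W) ∘ₗ twistedDerivative W V l

theorem twistedDerivative_succ (W V : R[X]) (l : ℕ) (a : R[X]) :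
    twistedDerivative W V (l + 1) a = W * derivative (twistedDerivative W V l a) +
      (V - (l : R[X]) * derivative W) * twistedDerivative W V l a := rfl

theorem iterate_derivative_mul_mul_pow {W V w : R[X]} (hw : W * derivative w = V * w) (a : R[X])
    (l : ℕ) : derivative^[l] (a * w) * W ^ l = w * twistedDerivative W V l a := by
  induction l with
  | zero => simp [twistedDerivative, mul_comm a]
  | succ l ih =>
    have differentiated := congrArg (W * derivative ·) ih
    simp only [derivative_mul, derivative_pow, C_eq_natCast,
      ← Function.iterate_succ_apply' derivative] at differentiated
    have W_pow : W * ((l : R[X]) * W ^ (l - 1)) = l * W ^ l := by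
      rcases l with _ | l
      · simp
      · rw [Nat.add_sub_cancel, pow_succ]; ring
    rw [twistedDerivative_succ]
    linear_combination differentiated + twistedDerivative W V l a * hw - l * derivative W * ih -
      derivative^[l] (a * w) * derivative W * W_pow

theorem mul_mem_degreeLT {m n : ℕ} {f g : R[X]} (hf : f.natDegree ≤ n) (hg : g ∈ degreeLT R m) :
    f * g ∈ degreeLT R (m + n) := by
  rw [mem_degreeLT] at hg ⊢
  calc (f * g).degree ≤ g.degree + f.degree := mul_comm f g ▸ degree_mul_le g f
    _ ≤ g.degree + n := by gcongr; exact natDegree_le_iff_degree_le.1 hf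
    _ < m + n := WithBot.add_lt_add_right (WithBot.natCast_ne_bot n) hg
    _ = (m + n : ℕ) := (Nat.cast_add m n).symm

theorem twistedDerivative_mem_degreeLT {W V : R[X]} {n A : ℕ} (hW : W.natDegree ≤ n)
    (hV : V.natDegree ≤ n) {a : R[X]} (ha : a ∈ degreeLT R A) (l : ℕ) :
    twistedDerivative W V l a ∈ degreeLT R (A + l * n) := by
  induction l with
  | zero => simpa [twistedDerivative] using ha
  | succ l ih =>
    have derivative_mem : derivative (twistedDerivative W V l a) ∈ degreeLT R (A + l * n) :=
      mem_degreeLT.2 (degree_derivative_le.trans_lt (mem_degreeLT.1 ih))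
    have natDegree_twist : (V - (l : R[X]) * derivative W).natDegree ≤ n := by
      refine (natDegree_sub_le _ _).trans (max_le hV ?_)
      rw [← nsmul_eq_mul]
      exact (natDegree_smul_le _ _).trans ((natDegree_derivative_le W).trans (by omega))
    rw [twistedDerivative_succ, add_mul, one_mul, ← add_assoc]
    exact add_mem (mul_mem_degreeLT hW derivative_mem) (mul_mem_degreeLT natDegree_twist ih)

theorem exists_mul_derivative_prod_X_add_C_pow {I : Type*} [Fintype I] (σ : I → R) (m : I → ℕ) :
    ∃ V : R[X], V.natDegree ≤ Fintype.card I ∧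
      (∏ s, (X + C (σ s))) * derivative (∏ s, (X + C (σ s)) ^ m s) =
        V * ∏ s, (X + C (σ s)) ^ m s := by
  classical
  refine ⟨∑ s, m s • ∏ t ∈ Finset.univ.erase s, (X + C (σ t)), ?_, ?_⟩
  · refine natDegree_sum_le_of_forall_le _ _ fun s _ ↦ (natDegree_smul_le _ _).trans ?_
    refine (natDegree_prod_le _ _).trans ((Finset.sum_le_card_nsmul _ _ 1 fun t _ ↦ ?_).trans ?_)
    · exact natDegree_add_C.le.trans natDegree_X_le
    · simp
  · rw [derivative_prod_finset, Finset.mul_sum, Finset.sum_mul]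
    refine Finset.sum_congr rfl fun s _ ↦ ?_
    rw [← Finset.mul_prod_erase _ (fun s ↦ X + C (σ s)) (Finset.mem_univ s),
      ← Finset.mul_prod_erase _ (fun s ↦ (X + C (σ s)) ^ m s) (Finset.mem_univ s),
      derivative_X_add_C_pow]
    rcases m s with _ | n
    · simp
    · rw [Nat.add_sub_cancel, pow_succ, nsmul_eq_mul, C_eq_natCast]
      ring

end TwistedDerivative

section Stepanov

open Polynomial

theorem card_mul_le_natDegree_of_forall_le_rootMultiplicity {R : Type*} [CommRing R] [IsDomain R]
    {f : R[X]} {S : Finset R} {M : ℕ} (h : ∀ x ∈ S, M ≤ f.rootMultiplicity x) :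
    S.card * M ≤ f.natDegree := by
  classical
  calc S.card * M ≤ ∑ x ∈ S, f.roots.count x := by
        rw [← smul_eq_mul]
        exact Finset.card_nsmul_le_sum _ _ _ fun x hx ↦ (h x hx).trans_eq (count_roots f).symm
    _ ≤ ∑ x ∈ S ∪ f.roots.toFinset, f.roots.count x :=
        Finset.sum_le_sum_of_subset Finset.subset_union_left
    _ = f.roots.card := Multiset.sum_count_eq_card fun x hx ↦
        Finset.mem_union_right _ (Multiset.mem_toFinset.2 hx)
    _ ≤ f.natDegree := card_roots' f

theorem le_rootMultiplicity_of_forall_lt_isRoot_iterate_derivative {R : Type*} [CommRing R]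
    [IsDomain R] (p : ℕ) [CharP R p] {f : R[X]} (hf : f ≠ 0) {x : R} {M : ℕ} (hM : M ≤ p)
    (h : ∀ l < M, (derivative^[l] f).IsRoot x) : M ≤ f.rootMultiplicity x := by
  rcases M with _ | M
  · exact Nat.zero_le _
  have hp : p.Prime := CharP.char_prime_of_ne_zero R (by omega)
  refine lt_rootMultiplicity_of_isRoot_iterate_derivative_of_mem_nonZeroDivisors hf
    (fun l hl ↦ h l (Nat.lt_succ_of_le hl)) ?_
  rw [mem_nonZeroDivisors_iff_ne_zero, Ne, CharP.cast_eq_zero_iff R p, hp.dvd_factorial]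
  omega

theorem iterate_derivative_mul_of_derivative_eq_zero {R : Type*} [CommSemiring R] {g : R[X]}
    (hg : derivative g = 0) (f : R[X]) (l : ℕ) :
    derivative^[l] (g * f) = g * derivative^[l] f := by
  induction l with
  | zero => rfl
  | succ l ih =>
    rw [Function.iterate_succ_apply', Function.iterate_succ_apply', ih, derivative_mul, hg,
      zero_mul, zero_add]

theorem eq_zero_of_sum_pow_mul_eq_zero {R : Type*} [CommRing R] [IsDomain R] {y : R} (hy : y ≠ 0)
    {J : ℕ} {G : Fin J → R} (hG : ∀ j, y ∣ G j → G j = 0) (h : ∑ j : Fin J, y ^ (j : ℕ) * G j = 0) :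
    G = 0 := by
  induction J with
  | zero => exact Subsingleton.elim _ _
  | succ J ih =>
    simp only [Fin.sum_univ_succ, Fin.val_zero, pow_zero, one_mul, Fin.val_succ, pow_succ',
      mul_assoc, ← Finset.mul_sum] at h
    have head : G 0 = 0 := hG 0 ⟨-_, by rw [mul_neg]; exact eq_neg_of_add_eq_zero_left h⟩
    rw [head, zero_add, mul_eq_zero, or_iff_right hy] at h
    have tail : (fun j : Fin J ↦ G j.succ) = 0 := ih (fun j ↦ hG j.succ) h
    funext j
    exact j.cases head (congrFun tail)

variable {K : Type*} [Field K]

theorem exists_ne_zero_forall_map_eq_zero_of_mem_degreeLT {V : Type*} [AddCommGroup V] [Module K V]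
    [FiniteDimensional K V] {M N : ℕ} {L : Fin M → V →ₗ[K] K[X]}
    (hL : ∀ l v, L l v ∈ degreeLT K N) (h : M * N < Module.finrank K V) :
    ∃ v ≠ 0, ∀ l, L l v = 0 := by
  have : Module.Finite K (degreeLT K N) := .equiv (degreeLTEquiv K N).symm
  let T : V →ₗ[K] (Fin M → degreeLT K N) := LinearMap.pi fun l ↦ (L l).codRestrict _ (hL l)
  have ker_ne_bot : LinearMap.ker T ≠ ⊥ := LinearMap.ker_ne_bot_of_finrank_lt (by
    simpa [Module.finrank_pi_fintype, (degreeLTEquiv K N).finrank_eq] using h)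
  obtain ⟨v, hv, hv0⟩ := Submodule.exists_mem_ne_zero_of_ne_bot ker_ne_bot
  exact ⟨v, hv0, fun l ↦ congrArg Subtype.val (congrFun hv l)⟩

theorem exists_ne_zero_sum_X_pow_mul_twistedDerivative_eq_zero {E : Type*} [Fintype E] {W : K[X]}
    {V : E → K[X]} {n A J M : ℕ} (hW : W.natDegree ≤ n) (hV : ∀ e, (V e).natDegree ≤ n)
    (hM : M * (A + J + M * n) < J * (Fintype.card E * A)) :
    ∃ a : Fin J → E → K[X], a ≠ 0 ∧ (∀ j e, a j e ∈ degreeLT K A) ∧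
      ∀ l < M, ∑ j : Fin J, X ^ (j : ℕ) * ∑ e, twistedDerivative W (V e) l (a j e) = 0 := by
  have : Module.Finite K (degreeLT K A) := .equiv (degreeLTEquiv K A).symm
  let L (l : Fin M) : (Fin J → E → degreeLT K A) →ₗ[K] K[X] :=
    ∑ j : Fin J, ∑ e, LinearMap.mulLeft K (X ^ (j : ℕ)) ∘ₗ twistedDerivative W (V e) l ∘ₗ
      (degreeLT K A).subtype ∘ₗ LinearMap.proj e ∘ₗ LinearMap.proj j
  have L_apply (l : Fin M) (c : Fin J → E → degreeLT K A) :
      L l c = ∑ j : Fin J, X ^ (j : ℕ) * ∑ e, twistedDerivative W (V e) l (c j e : K[X]) := by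
    simp [L, Finset.mul_sum]
  have L_mem (l : Fin M) (c : Fin J → E → degreeLT K A) :
      L l c ∈ degreeLT K (A + J + M * n) := by
    rw [L_apply]
    refine sum_mem fun j _ ↦ degreeLT_mono ?_ (mul_mem_degreeLT (natDegree_X_pow_le _)
      (sum_mem fun e _ ↦ twistedDerivative_mem_degreeLT hW (hV e) (c j e).2 l))
    have := Nat.mul_le_mul_right n l.2.le
    omega
  obtain ⟨c, hc, hLc⟩ := exists_ne_zero_forall_map_eq_zero_of_mem_degreeLT L_mem (by
    simpa [Module.finrank_pi_fintype, (degreeLTEquiv K A).finrank_eq] using hM)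
  refine ⟨fun j e ↦ c j e, fun h ↦ hc ?_, fun j e ↦ (c j e).2, fun l hl ↦ ?_⟩
  · funext j e
    exact Subtype.ext (congrFun (congrFun h j) e)
  · rw [← hLc ⟨l, hl⟩, L_apply]

variable [Fintype K] {I : Type*} [Fintype I] {k d J : ℕ}

/-- Stepanov's auxiliary polynomial. At a point `x` where all the `x + σ_s` are `d`-th roots of
unity, `X ^ #K` takes the value `x` and the box monomials the value `1`. -/
noncomputable def stepanovPolynomial [DecidableEq I] (σ : I → K) (d : ℕ)
    (a : Fin J → (I → Fin k) → K[X]) : K[X] :=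
  ∑ j : Fin J, (X ^ Fintype.card K) ^ (j : ℕ) *
    ∑ e, a j e * boxMonomial (fun s ↦ (X + C (σ s)) ^ d) e

variable {σ : I → K} {a : Fin J → (I → Fin k) → K[X]}

theorem stepanovPolynomial_ne_zero [DecidableEq I] {A : ℕ} (hkd : k * d = Fintype.card K - 1)
    (hσ : Function.Injective σ) (hσ0 : ∀ s, σ s ≠ 0)
    (hA : k ^ Fintype.card I * (A + Fintype.card I) < Fintype.card K)
    (hdeg : ∀ j e, (a j e).natDegree ≤ A) (ha : a ≠ 0) : stepanovPolynomial σ d a ≠ 0 := by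
  have coeff_eq_zero (j : Fin J) (hdvd : X ^ Fintype.card K ∣
      ∑ e, a j e * boxMonomial (fun s ↦ (X + C (σ s)) ^ d) e) : a j = 0 :=
    eq_zero_of_X_pow_card_dvd_sum_mul_boxMonomial hkd hσ hσ0 hA (hdeg j) hdvd
  intro hzero
  have blocks_eq_zero := eq_zero_of_sum_pow_mul_eq_zero (pow_ne_zero _ X_ne_zero)
    (fun j hdvd ↦ by simp [coeff_eq_zero j hdvd]) hzero
  exact ha (funext fun j ↦ coeff_eq_zero j (by rw [congrFun blocks_eq_zero j]; exact dvd_zero _))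

theorem natDegree_stepanovPolynomial_le [DecidableEq I] {A : ℕ} (hkd : k * d = Fintype.card K - 1)
    (hdeg : ∀ j e, (a j e).natDegree ≤ A) :
    (stepanovPolynomial σ d a).natDegree ≤
      Fintype.card K * J + A + Fintype.card K * Fintype.card I := by
  have boxMonomial_le (e : I → Fin k) :
      (boxMonomial (fun s ↦ (X + C (σ s)) ^ d) e).natDegree ≤ Fintype.card K * Fintype.card I := by
    refine (natDegree_prod_le _ _).trans ((Finset.sum_le_card_nsmul _ _ (Fintype.card K)
      fun s _ ↦ ?_).trans_eq (by rw [Finset.card_univ, smul_eq_mul, mul_comm]))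
    rw [← pow_mul]
    calc ((X + C (σ s)) ^ (d * (e s : ℕ))).natDegree ≤ d * e s := by
          rw [natDegree_pow, natDegree_X_add_C, mul_one]
      _ ≤ k * d := mul_comm k d ▸ Nat.mul_le_mul_left d (e s).2.le
      _ ≤ Fintype.card K := hkd ▸ Nat.sub_le _ _
  refine natDegree_sum_le_of_forall_le _ _ fun j _ ↦ natDegree_mul_le.trans ?_
  rw [← pow_mul, natDegree_X_pow, add_assoc]
  refine add_le_add (Nat.mul_le_mul_left _ j.2.le) (natDegree_sum_le_of_forall_le _ _ fun e _ ↦ ?_)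
  exact natDegree_mul_le.trans (add_le_add (hdeg j e) (boxMonomial_le e))

theorem iterate_derivative_stepanovPolynomial_mul_pow [DecidableEq I] {W : K[X]}
    {V : (I → Fin k) → K[X]}
    (hV : ∀ e, W * derivative (boxMonomial (fun s ↦ (X + C (σ s)) ^ d) e) =
      V e * boxMonomial (fun s ↦ (X + C (σ s)) ^ d) e) (l : ℕ) :
    derivative^[l] (stepanovPolynomial σ d a) * W ^ l =
      ∑ j : Fin J, (X ^ Fintype.card K) ^ (j : ℕ) * ∑ e,
        boxMonomial (fun s ↦ (X + C (σ s)) ^ d) e * twistedDerivative W (V e) l (a j e) := by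
  have derivative_X_pow_card (j : ℕ) : derivative (((X : K[X]) ^ Fintype.card K) ^ j) = 0 := by
    rw [derivative_pow, derivative_X_pow, FiniteField.cast_card_eq_zero, C_0, zero_mul, mul_zero]
  rw [stepanovPolynomial, iterate_derivative_sum, Finset.sum_mul]
  refine Finset.sum_congr rfl fun j _ ↦ ?_
  rw [iterate_derivative_mul_of_derivative_eq_zero (derivative_X_pow_card j),
    iterate_derivative_sum, mul_assoc, Finset.sum_mul]
  simp only [iterate_derivative_mul_mul_pow (hV _)]

theorem card_mul_le_of_forall_add_pow_eq_one (p : ℕ) [CharP K p] {A M : ℕ}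
    (hkd : k * d = Fintype.card K - 1) (hσ : Function.Injective σ) (hσ0 : ∀ s, σ s ≠ 0)
    (hA : k ^ Fintype.card I * (A + Fintype.card I) < Fintype.card K) (hMp : M ≤ p)
    (hM : M * (A + J + M * Fintype.card I) < J * (k ^ Fintype.card I * A)) {S : Finset K}
    (hS : ∀ x ∈ S, ∀ s, (x + σ s) ^ d = 1) :
    S.card * M ≤ Fintype.card K * J + A + Fintype.card K * Fintype.card I := by
  classical
  let W : K[X] := ∏ s, (X + C (σ s))
  choose V natDegree_V hV using fun e : I → Fin k ↦
    exists_mul_derivative_prod_X_add_C_pow σ fun s ↦ d * e s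
  simp only [pow_mul] at hV
  have natDegree_W : W.natDegree ≤ Fintype.card I := by
    refine (natDegree_prod_le _ _).trans_eq ?_
    simp only [natDegree_X_add_C, Finset.sum_const, smul_eq_mul, mul_one, Finset.card_univ]
  obtain ⟨a, ha, deg_a, vanish⟩ := exists_ne_zero_sum_X_pow_mul_twistedDerivative_eq_zero
    natDegree_W natDegree_V (by simpa using hM)
  have natDegree_a (j e) : (a j e).natDegree ≤ A :=
    natDegree_le_of_degree_le (mem_degreeLT.1 (deg_a j e)).le
  have eval_boxMonomial {x : K} (hx : x ∈ S) (e : I → Fin k) :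
      eval x (boxMonomial (fun s ↦ (X + C (σ s)) ^ d) e) = 1 := by
    simp [boxMonomial, eval_prod, hS x hx]
  have eval_W {x : K} (hx : x ∈ S) : eval x W ≠ 0 := by
    have hd : d ≠ 0 := by
      have := Fintype.one_lt_card (α := K)
      rintro rfl
      omega
    simp only [W, eval_prod, eval_add, eval_X, eval_C]
    refine Finset.prod_ne_zero_iff.2 fun s _ hs ↦ zero_ne_one (α := K) ?_
    rw [← hS x hx s, hs, zero_pow hd]
  refine (card_mul_le_natDegree_of_forall_le_rootMultiplicity fun x hx ↦ ?_).trans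
    (natDegree_stepanovPolynomial_le (σ := σ) hkd natDegree_a)
  refine le_rootMultiplicity_of_forall_lt_isRoot_iterate_derivative p
    (stepanovPolynomial_ne_zero hkd hσ hσ0 hA natDegree_a ha) hMp fun l hl ↦ ?_
  have eval_derivative :=
    congrArg (eval x) (iterate_derivative_stepanovPolynomial_mul_pow (a := a) hV l)
  have eval_vanish := congrArg (eval x) (vanish l hl)
  simp only [eval_mul, eval_finsetSum, eval_pow, eval_X, eval_boxMonomial hx, one_mul,
    FiniteField.pow_card, eval_zero] at eval_derivative eval_vanish
  rw [eval_vanish] at eval_derivative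
  exact (mul_eq_zero.1 eval_derivative).resolve_right (pow_ne_zero _ (eval_W hx))

end Stepanov

section Optimization

theorem add_three_le_three_mul_two_pow (h : ℕ) : h + 3 ≤ 3 * 2 ^ h := by
  induction h with
  | zero => norm_num
  | succ n ih => rw [pow_succ]; omega

theorem four_mul_succ_mul_pow_lt {k h p : ℕ} (hk : 2 ≤ k) (hh : 2 ≤ h)
    (hkp : 4 * k ^ (2 * (h - 1)) < p) : 4 * ((h + 1) * k ^ h) < 3 * p := by
  obtain ⟨n, rfl⟩ := Nat.exists_eq_add_of_le' hh
  have pow_split : k ^ (2 * (n + 2 - 1)) = k ^ n * k ^ (n + 2) := by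
    rw [← pow_add]
    congr 1
    omega
  rw [pow_split] at hkp
  calc 4 * ((n + 2 + 1) * k ^ (n + 2)) ≤ 4 * (3 * 2 ^ n * k ^ (n + 2)) := by
        gcongr
        exact add_three_le_three_mul_two_pow n
    _ ≤ 4 * (3 * k ^ n * k ^ (n + 2)) := by gcongr
    _ < 3 * p := by linarith

theorem exists_mul_add_lt_and_le_four_mul {E h p : ℕ} (hE : 0 < E)
    (hEp : 4 * ((h + 1) * E) < 3 * p) : ∃ A, E * (A + h) < p ∧ p ≤ 4 * (E * A) := by
  have expand : (h + 1) * E = h * E + E := by ring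
  have le_quotient : h ≤ (p - 1) / E := (Nat.le_div_iff_mul_le hE).2 (by omega)
  obtain ⟨A, hA⟩ := Nat.exists_eq_add_of_le' le_quotient
  have lower := Nat.mul_div_le (p - 1) E
  have upper := Nat.lt_mul_div_succ (p - 1) hE
  rw [hA] at lower upper
  refine ⟨A, by omega, ?_⟩
  have : E * (A + h + 1) = E * A + (h + 1) * E := by ring
  omega

theorem mul_lt_two_mul_mul_of_four_mul_sq_le {B h p A M : ℕ} (hh : 2 ≤ h) (hp : 64 < p)
    (hM : 4 * M ^ 2 ≤ p) (hMB : M * A ≤ B) (hpB : p ≤ 4 * B) :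
    M * (A + 2 * h + M * h) < 2 * h * B := by
  have sixteen_mul_lt : 16 * M < p := by
    by_contra! hc
    nlinarith
  refine lt_of_mul_lt_mul_left (a := 4) ?_ zero_le
  calc 4 * (M * (A + 2 * h + M * h)) = 4 * (M * A) + h * (8 * M + 4 * M ^ 2) := by ring
    _ < 4 * B + h * (2 * B + 4 * B) :=
        add_lt_add_of_le_of_lt (by gcongr) (Nat.mul_lt_mul_of_pos_left (by omega) (by omega))
    _ ≤ 4 * (2 * h * B) := by nlinarith

theorem card_le_of_forall_add_pow_eq_one {K : Type*} [CommRing K] [IsDomain K] {d : ℕ}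
    (hd : 0 < d) (a : K) {S : Finset K} (hS : ∀ x ∈ S, (x + a) ^ d = 1) : S.card ≤ d := by
  classical
  rw [← Finset.card_image_of_injective S (add_left_injective a)]
  refine (Finset.card_le_card (t := Polynomial.nthRootsFinset d (1 : K)) fun y hy ↦ ?_).trans ?_
  · obtain ⟨x, hx, rfl⟩ := Finset.mem_image.1 hy
    exact (Polynomial.mem_nthRootsFinset hd _).2 (hS x hx)
  · rw [Polynomial.nthRootsFinset]
    exact (Multiset.toFinset_card_le _).trans (Polynomial.card_nthRoots _ _)

variable {p : ℕ} [Fact p.Prime]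

theorem injective_natCast_succ_zmod {h : ℕ} (hp : h < p) :
    Function.Injective fun s : Fin h ↦ (((s : ℕ) + 1 : ℕ) : ZMod p) := by
  intro s t hst
  have := ((ZMod.natCast_eq_natCast_iff _ _ _).1 hst).eq_of_lt_of_lt (by omega) (by omega)
  exact Fin.ext (by omega)

theorem natCast_succ_zmod_ne_zero {h : ℕ} (hp : h < p) (s : Fin h) :
    (((s : ℕ) + 1 : ℕ) : ZMod p) ≠ 0 := by
  rw [Ne, ZMod.natCast_eq_zero_iff]
  exact Nat.not_dvd_of_pos_of_lt (by omega) (by omega)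

theorem card_mul_le_of_forall_add_natCast_pow_eq_one (hp : 64 < p) {k d h M : ℕ} (hk : 2 ≤ k)
    (hkd : k * d = p - 1) (hh : 1 ≤ h) (hpk : p ≤ 4 * k ^ (2 * h))
    (hkp : 4 * k ^ (2 * (h - 1)) < p) (hM : 4 * M ^ 2 ≤ p) {S : Finset (ZMod p)}
    (hS : ∀ x ∈ S, ∀ s : Fin h, (x + ((s : ℕ) + 1 : ℕ)) ^ d = 1) :
    S.card * M ≤ 4 * h * p := by
  have M_le : M ≤ k ^ h := by
    refine (Nat.pow_le_pow_iff_left two_ne_zero).1 ?_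
    rw [← pow_mul, mul_comm h]
    omega
  obtain rfl | hh := hh.eq_or_lt
  · have hd : 0 < d := Nat.pos_of_ne_zero (by rintro rfl; omega)
    calc S.card * M ≤ d * k ^ 1 :=
          Nat.mul_le_mul (card_le_of_forall_add_pow_eq_one hd _ fun x hx ↦ hS x hx 0) M_le
      _ ≤ 4 * 1 * p := by linarith [Nat.sub_le p 1]
  have hE : 0 < k ^ h := by positivity
  obtain ⟨A, hA, hpA⟩ :=
    exists_mul_add_lt_and_le_four_mul hE (four_mul_succ_mul_pow_lt hk hh hkp)
  have A_add_lt : A + h < p := (Nat.le_mul_of_pos_left _ hE).trans_lt hA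
  have M_le_p : M ≤ p := by nlinarith
  have bound := card_mul_le_of_forall_add_pow_eq_one (J := 2 * h) p (by rwa [ZMod.card])
    (injective_natCast_succ_zmod (by omega)) (natCast_succ_zmod_ne_zero (by omega))
    (by simpa using hA) M_le_p
    (by simpa using mul_lt_two_mul_mul_of_four_mul_sq_le hh hp hM (Nat.mul_le_mul_right A M_le) hpA)
    hS
  rw [ZMod.card, Fintype.card_fin] at bound
  nlinarith

end Optimization

section Counting

theorem sum_Icc_two_one_div_sq_le (D : ℕ) : ∑ d ∈ Finset.Icc 2 D, 1 / (d : ℝ) ^ 2 ≤ 2 / 3 := by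
  have one_add_le : 1 + ∑ d ∈ Finset.Icc 2 D, 1 / (d : ℝ) ^ 2 ≤ Real.pi ^ 2 / 6 := by
    have := sum_le_hasSum (insert 1 (Finset.Icc 2 D)) (fun _ _ ↦ by positivity) hasSum_zeta_two
    rwa [Finset.sum_insert (by simp), Nat.cast_one, one_pow, div_one] at this
  nlinarith [Real.pi_lt_d4, Real.pi_pos]

theorem card_filter_dvd_le (N u : ℕ) :
    (((Finset.Icc 1 N).filter (u ∣ ·)).card : ℝ) ≤ N / u :=
  (congrArg Nat.cast (Nat.Ioc_filter_dvd_card_eq_div N u)).trans_le Nat.cast_div_le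

theorem card_filter_dvd_add_le {u : ℕ} (hu : 0 < u) (N m : ℕ) :
    (((Finset.Icc 1 N).filter (u ∣ · + m)).card : ℝ) ≤ N / u + 1 := by
  have card_add_le : ((Finset.Icc 1 N).filter (u ∣ · + m)).card + m / u ≤ (N + m) / u := by
    rw [← Nat.Ioc_filter_dvd_card_eq_div m, ← Nat.Ioc_filter_dvd_card_eq_div (N + m),
      ← Finset.card_map (addRightEmbedding m), ← Finset.card_union_of_disjoint]
    · refine Finset.card_le_card fun x hx ↦ ?_
      simp only [Finset.mem_union, Finset.mem_map, Finset.mem_filter, Finset.mem_Icc,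
        addRightEmbedding_apply, Finset.mem_Ioc] at hx ⊢
      obtain ⟨n, hn, rfl⟩ | hx := hx
      · exact ⟨by omega, hn.2⟩
      · exact ⟨by omega, hx.2⟩
    · rw [Finset.disjoint_left]
      simp only [Finset.mem_map, Finset.mem_filter, Finset.mem_Icc, addRightEmbedding_apply,
        Finset.mem_Ioc]
      grind
  have add_div_le : (N + m) / u ≤ N / u + m / u + 1 := by
    rw [Nat.add_div hu]
    split_ifs <;> omega
  calc (((Finset.Icc 1 N).filter (u ∣ · + m)).card : ℝ) ≤ (N / u : ℕ) + 1 := by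
        exact_mod_cast (by omega)
    _ ≤ N / u + 1 := by
        gcongr
        exact Nat.cast_div_le

/-- The pairs `(n, q)` in `[1, N] × [1, Q]` which are coprime and for which `u` divides none of
`q, n + q, n + 2q, …, n + hq`. The fractions `n / q` are then distinct, and `n / q + s` is a
quotient of two integers prime to `u` for every `1 ≤ s ≤ h`. -/
def sievedPairs (N Q h u : ℕ) : Finset (ℕ × ℕ) :=
  (Finset.Icc 1 N ×ˢ Finset.Icc 1 Q).filter fun x ↦
    x.1.Coprime x.2 ∧ ¬ u ∣ x.2 ∧ ∀ s ∈ Finset.Icc 1 h, ¬ u ∣ x.1 + s * x.2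

theorem card_filter_not_coprime_le (N Q : ℕ) :
    (((Finset.Icc 1 N ×ˢ Finset.Icc 1 Q).filter fun x ↦ ¬ x.1.Coprime x.2).card : ℝ) ≤
      N * Q * (2 / 3) := by
  let multiples (d : ℕ) : Finset (ℕ × ℕ) :=
    (Finset.Icc 1 N).filter (d ∣ ·) ×ˢ (Finset.Icc 1 Q).filter (d ∣ ·)
  have cover : ((Finset.Icc 1 N ×ˢ Finset.Icc 1 Q).filter fun x ↦ ¬ x.1.Coprime x.2) ⊆
      (Finset.Icc 2 Q).biUnion multiples := by
    intro x hx
    simp only [Finset.mem_filter, Finset.mem_product, Finset.mem_Icc] at hx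
    obtain ⟨⟨hn, hq⟩, hx⟩ := hx
    have := Nat.gcd_pos_of_pos_left x.2 hn.1
    have := Nat.gcd_le_right x.1 hq.1
    rw [Nat.Coprime] at hx
    simp only [multiples, Finset.mem_biUnion, Finset.mem_product, Finset.mem_filter,
      Finset.mem_Icc]
    exact ⟨x.1.gcd x.2, by omega, ⟨hn, Nat.gcd_dvd_left _ _⟩, hq, Nat.gcd_dvd_right _ _⟩
  have card_multiples_le (d : ℕ) : ((multiples d).card : ℝ) ≤ N * Q * (1 / (d : ℝ) ^ 2) := by
    rw [Finset.card_product, Nat.cast_mul]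
    calc _ ≤ (N / d * (Q / d) : ℝ) := by gcongr <;> exact card_filter_dvd_le _ _
      _ = N * Q * (1 / (d : ℝ) ^ 2) := by ring
  calc _ ≤ ∑ d ∈ Finset.Icc 2 Q, ((multiples d).card : ℝ) := by
        exact_mod_cast (Finset.card_le_card cover).trans Finset.card_biUnion_le
    _ ≤ ∑ d ∈ Finset.Icc 2 Q, N * Q * (1 / (d : ℝ) ^ 2) :=
        Finset.sum_le_sum fun d _ ↦ card_multiples_le d
    _ ≤ N * Q * (2 / 3) := by
        rw [← Finset.mul_sum]
        gcongr
        exact sum_Icc_two_one_div_sq_le Q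

theorem card_filter_dvd_snd_le (N Q u : ℕ) :
    (((Finset.Icc 1 N ×ˢ Finset.Icc 1 Q).filter fun x ↦ u ∣ x.2).card : ℝ) ≤ N * Q / u := by
  rw [Finset.filter_product_right (u ∣ ·), Finset.card_product, Nat.card_Icc, Nat.add_sub_cancel,
    Nat.cast_mul, mul_div_assoc]
  gcongr
  exact card_filter_dvd_le Q u

theorem card_filter_exists_dvd_add_mul_le {u : ℕ} (hu : 0 < u) (N Q h : ℕ) :
    (((Finset.Icc 1 N ×ˢ Finset.Icc 1 Q).filter
      fun x ↦ ∃ s ∈ Finset.Icc 1 h, u ∣ x.1 + s * x.2).card : ℝ) ≤ h * Q * (N / u + 1) := by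
  let progression (s : ℕ) := (Finset.Icc 1 N ×ˢ Finset.Icc 1 Q).filter fun x ↦ u ∣ x.1 + s * x.2
  have cover : ((Finset.Icc 1 N ×ˢ Finset.Icc 1 Q).filter
      fun x ↦ ∃ s ∈ Finset.Icc 1 h, u ∣ x.1 + s * x.2) ⊆
      (Finset.Icc 1 h).biUnion progression := by
    grind
  have card_progression_le (s : ℕ) : ((progression s).card : ℝ) ≤ Q * (N / u + 1) := by
    have card_eq : (progression s).card =
        ∑ q ∈ Finset.Icc 1 Q, ((Finset.Icc 1 N).filter (u ∣ · + s * q)).card := by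
      simp only [progression, Finset.card_filter, Finset.sum_product_right]
    rw [card_eq, Nat.cast_sum]
    refine (Finset.sum_le_sum fun q _ ↦ card_filter_dvd_add_le hu N (s * q)).trans_eq ?_
    rw [Finset.sum_const, Nat.card_Icc, Nat.add_sub_cancel, nsmul_eq_mul]
  calc _ ≤ ∑ s ∈ Finset.Icc 1 h, ((progression s).card : ℝ) := by
        exact_mod_cast (Finset.card_le_card cover).trans Finset.card_biUnion_le
    _ ≤ ∑ s ∈ Finset.Icc 1 h, (Q * (N / u + 1) : ℝ) :=
        Finset.sum_le_sum fun s _ ↦ card_progression_le s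
    _ = h * Q * (N / u + 1) := by
        rw [Finset.sum_const, Nat.card_Icc, Nat.add_sub_cancel, nsmul_eq_mul, mul_assoc]

theorem mul_div_three_le_card_sievedPairs_add {u : ℕ} (hu : 0 < u) (N Q h : ℕ) :
    (N * Q / 3 : ℝ) ≤ (sievedPairs N Q h u).card + N * Q / u + h * Q * (N / u + 1) := by
  classical
  let box := Finset.Icc 1 N ×ˢ Finset.Icc 1 Q
  have cover : box ⊆ sievedPairs N Q h u ∪ (box.filter (fun x ↦ ¬ x.1.Coprime x.2) ∪
      (box.filter (fun x ↦ u ∣ x.2) ∪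
        box.filter fun x ↦ ∃ s ∈ Finset.Icc 1 h, u ∣ x.1 + s * x.2)) := by
    intro x hx
    simp only [sievedPairs, Finset.mem_union, Finset.mem_filter]
    by_contra! hc
    grind
  have card_box : (box.card : ℝ) = N * Q := by simp [box]
  have card_le : (box.card : ℝ) ≤ _ := Nat.cast_le.2 ((Finset.card_le_card cover).trans
    ((Finset.card_union_le _ _).trans (Nat.add_le_add_left ((Finset.card_union_le _ _).trans
      (Nat.add_le_add_left (Finset.card_union_le _ _) _)) _)))
  push_cast at card_le
  linarith [card_filter_not_coprime_le N Q, card_filter_dvd_snd_le N Q u,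
    card_filter_exists_dvd_add_mul_le hu N Q h]

end Counting

section Quotients

variable {p N Q h u : ℕ} [Fact p.Prime]

theorem natCast_snd_ne_zero_of_mem_sievedPairs (hNQ : N * Q < p) {x : ℕ × ℕ}
    (hx : x ∈ sievedPairs N Q h u) : (x.2 : ZMod p) ≠ 0 := by
  simp only [sievedPairs, Finset.mem_filter, Finset.mem_product, Finset.mem_Icc] at hx
  obtain ⟨⟨⟨one_le_n, n_le⟩, one_le_q, q_le⟩, -⟩ := hx
  rw [Ne, ZMod.natCast_eq_zero_iff]
  exact Nat.not_dvd_of_pos_of_lt one_le_q (by nlinarith)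

theorem injOn_natCast_div_sievedPairs (hNQ : N * Q < p) :
    Set.InjOn (fun x : ℕ × ℕ ↦ (x.1 / x.2 : ZMod p)) (sievedPairs N Q h u) := by
  intro x hx y hy hxy
  have x_ne_zero := natCast_snd_ne_zero_of_mem_sievedPairs hNQ hx
  have y_ne_zero := natCast_snd_ne_zero_of_mem_sievedPairs hNQ hy
  simp only [sievedPairs, Finset.coe_filter, Finset.mem_product, Finset.mem_Icc,
    Set.mem_ofPred_eq] at hx hy
  obtain ⟨⟨⟨-, xn_le⟩, xq_pos, xq_le⟩, x_coprime, -⟩ := hx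
  obtain ⟨⟨⟨yn_pos, yn_le⟩, yq_pos, yq_le⟩, y_coprime, -⟩ := hy
  have cross_mul : x.1 * y.2 = y.1 * x.2 := by
    rw [div_eq_div_iff x_ne_zero y_ne_zero, ← Nat.cast_mul, ← Nat.cast_mul,
      ZMod.natCast_eq_natCast_iff] at hxy
    exact hxy.eq_of_lt_of_lt ((Nat.mul_le_mul xn_le yq_le).trans_lt hNQ)
      ((Nat.mul_le_mul yn_le xq_le).trans_lt hNQ)
  have fst_eq : x.1 = y.1 := Nat.dvd_antisymm (x_coprime.dvd_of_dvd_mul_right ⟨_, cross_mul.symm⟩)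
    (y_coprime.dvd_of_dvd_mul_right ⟨_, cross_mul⟩)
  rw [fst_eq] at cross_mul
  exact Prod.ext fst_eq (Nat.eq_of_mul_eq_mul_left yn_pos cross_mul).symm

theorem natCast_div_add_pow_eq_one_of_mem_sievedPairs (hNQ : N * Q < p) {d : ℕ}
    (hd : ∀ n : ℕ, 0 < n → n ≤ N + h * Q → ¬ u ∣ n → (n : ZMod p) ^ d = 1) {x : ℕ × ℕ}
    (hx : x ∈ sievedPairs N Q h u) {s : ℕ} (hs : s ∈ Finset.Icc 1 h) :
    (x.1 / x.2 + s : ZMod p) ^ d = 1 := by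
  have q_ne_zero := natCast_snd_ne_zero_of_mem_sievedPairs hNQ hx
  simp only [sievedPairs, Finset.mem_filter, Finset.mem_product, Finset.mem_Icc] at hx hs
  obtain ⟨⟨⟨n_pos, n_le⟩, q_pos, q_le⟩, -, not_dvd_q, not_dvd⟩ := hx
  have q_pow : (x.2 : ZMod p) ^ d = 1 := hd x.2 q_pos (by nlinarith) not_dvd_q
  have numerator_pow : ((x.1 + s * x.2 : ℕ) : ZMod p) ^ d = 1 :=
    hd _ (by omega) (add_le_add n_le (Nat.mul_le_mul hs.2 q_le)) (not_dvd s hs)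
  rw [div_add' _ _ _ q_ne_zero, div_pow, q_pow, div_one]
  exact_mod_cast numerator_pow

theorem card_sievedPairs_mul_le (hp : 64 < p) {k d M : ℕ} (hk : 2 ≤ k) (hkd : k * d = p - 1)
    (hh : 1 ≤ h) (hpk : p ≤ 4 * k ^ (2 * h)) (hkp : 4 * k ^ (2 * (h - 1)) < p)
    (hM : 4 * M ^ 2 ≤ p) (hNQ : N * Q < p)
    (hd : ∀ n : ℕ, 0 < n → n ≤ N + h * Q → ¬ u ∣ n → (n : ZMod p) ^ d = 1) :
    (sievedPairs N Q h u).card * M ≤ 4 * h * p := by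
  classical
  rw [← Finset.card_image_of_injOn (injOn_natCast_div_sievedPairs hNQ)]
  refine card_mul_le_of_forall_add_natCast_pow_eq_one hp hk hkd hh hpk hkp hM fun y hy s ↦ ?_
  obtain ⟨x, hx, rfl⟩ := Finset.mem_image.1 hy
  exact natCast_div_add_pow_eq_one_of_mem_sievedPairs hNQ hd hx
    (Finset.mem_Icc.2 ⟨by omega, by omega⟩)

end Quotients

theorem exists_pow_eq_one_of_mulChar_eq_one {K R : Type*} [Field K] [Fintype K]
    [CommMonoidWithZero R] {χ : MulChar K R} (hχ : χ ≠ 1) :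
    ∃ k d : ℕ, 2 ≤ k ∧ k * d = Fintype.card K - 1 ∧ ∀ x, χ x = 1 → x ^ d = 1 := by
  classical
  have index_ne_one : χ.toUnitHom.ker.index ≠ 1 := fun h ↦ hχ <| MulChar.ext fun a ↦ by
    have ha : a ∈ χ.toUnitHom.ker := Subgroup.index_eq_one.1 h ▸ Subgroup.mem_top a
    rw [← MulChar.coe_toUnitHom, MonoidHom.mem_ker.1 ha, Units.val_one, MulChar.one_apply_coe]
  have index_ne_zero : χ.toUnitHom.ker.index ≠ 0 := Subgroup.index_ne_zero_of_finite
  refine ⟨χ.toUnitHom.ker.index, Nat.card χ.toUnitHom.ker, by omega, ?_, fun x hx ↦ ?_⟩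
  · rw [mul_comm, Subgroup.card_mul_index, Nat.card_eq_fintype_card, Fintype.card_units]
  · have isUnit_x : IsUnit x := by
      by_contra hx'
      rw [χ.map_nonunit hx'] at hx
      have := subsingleton_of_zero_eq_one hx
      exact hχ (MulChar.ext fun a ↦ Subsingleton.elim _ _)
    obtain ⟨a, rfl⟩ := isUnit_x
    have ha : a ∈ χ.toUnitHom.ker :=
      MonoidHom.mem_ker.2 (Units.ext (by rw [MulChar.coe_toUnitHom, hx, Units.val_one]))
    rw [← Units.val_pow_eq_pow_val,
      orderOf_dvd_iff_pow_eq_one.1 (Subgroup.orderOf_dvd_natCard _ ha), Units.val_one]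

section Estimates

theorem exists_le_four_mul_pow_and_lt {k p : ℕ} (hk : 2 ≤ k) (hp : 4 < p) :
    ∃ h, 1 ≤ h ∧ p ≤ 4 * k ^ (2 * h) ∧ 4 * k ^ (2 * (h - 1)) < p := by
  classical
  have exists_le : ∃ h, p ≤ 4 * k ^ (2 * h) := by
    have := Nat.lt_pow_self (n := 2 * p) (show 1 < k by omega)
    exact ⟨p, by omega⟩
  have find_pos : 0 < Nat.find exists_le := (Nat.find_pos exists_le).2 (by simpa using hp)
  exact ⟨Nat.find exists_le, find_pos, Nat.find_spec exists_le,
    not_le.1 (Nat.find_min exists_le (Nat.sub_one_lt find_pos.ne'))⟩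

theorem natCast_le_mul_log_of_four_mul_pow_lt {k h p : ℕ} (hk : 2 ≤ k) (hh : 1 ≤ h)
    (hkp : 4 * k ^ (2 * (h - 1)) < p) : (h : ℝ) ≤ 0.7214 * Real.log p := by
  have two_pow_lt : 2 ^ (2 * h) < p := by
    refine lt_of_le_of_lt ?_ hkp
    calc 2 ^ (2 * h) = 4 * 2 ^ (2 * (h - 1)) := by
          rw [show 2 * h = 2 + 2 * (h - 1) by omega, pow_add]; norm_num
      _ ≤ 4 * k ^ (2 * (h - 1)) := by gcongr
  have log_lt : 2 * h * Real.log 2 < Real.log p := by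
    rw [← Nat.cast_two, ← Nat.cast_mul, ← Real.log_pow]
    exact Real.log_lt_log (by positivity) (by exact_mod_cast two_pow_lt)
  nlinarith [Real.log_two_gt_d9, Nat.cast_nonneg (α := ℝ) h]

theorem sixteen_le_log {x : ℝ} (hx : 10 ^ 7 ≤ x) : 16 ≤ Real.log x := by
  rw [Real.le_log_iff_exp_le (by linarith)]
  calc Real.exp 16 = Real.exp 1 ^ 16 := by rw [← Real.exp_nat_mul]; norm_num
    _ ≤ 2.7182818286 ^ 16 := by gcongr; exact Real.exp_one_lt_d9.le
    _ ≤ x := le_trans (by norm_num) hx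

theorem four_mul_log_le_of_fifty_six_le {y : ℝ} (hy : 56 ≤ y) : 4 * Real.log y ≤ 0.29 * y := by
  have lt_exp_four : 54.59 < Real.exp 4 := by
    calc (54.59 : ℝ) < 2.7182818283 ^ 4 := by norm_num
      _ ≤ Real.exp 1 ^ 4 := by gcongr; exact Real.exp_one_gt_d9.le
      _ = Real.exp 4 := by rw [← Real.exp_nat_mul]; norm_num
  have log_div_le := Real.log_le_sub_one_of_pos (show 0 < y / Real.exp 4 by positivity)
  rw [Real.log_div (by positivity) (by positivity), Real.log_exp] at log_div_le
  have div_le : y / Real.exp 4 ≤ 0.0184 * y := by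
    rw [div_le_iff₀ (Real.exp_pos 4)]
    nlinarith
  linarith

theorem rpow_one_fourth_pow_four {x : ℝ} (hx : 0 ≤ x) : (x ^ ((1 : ℝ) / 4)) ^ 4 = x := by
  simpa using Real.rpow_inv_natCast_pow hx four_ne_zero

theorem fifty_six_le_rpow_one_fourth {x : ℝ} (hx : 10 ^ 7 ≤ x) : 56 ≤ x ^ ((1 : ℝ) / 4) := by
  refine le_of_pow_le_pow_left₀ four_ne_zero (by positivity) ?_
  rw [rpow_one_fourth_pow_four (by linarith)]
  linarith

theorem log_le_mul_rpow_one_fourth {x : ℝ} (hx : 10 ^ 7 ≤ x) :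
    Real.log x ≤ 0.29 * x ^ ((1 : ℝ) / 4) := by
  have := four_mul_log_le_of_fifty_six_le (fifty_six_le_rpow_one_fourth hx)
  rw [Real.log_rpow (by linarith)] at this
  linarith

theorem lt_exp_two : 7.38 < Real.exp 2 := by
  calc (7.38 : ℝ) < 2.7182818283 ^ 2 := by norm_num
    _ ≤ Real.exp 1 ^ 2 := by gcongr; exact Real.exp_one_gt_d9.le
    _ = Real.exp 2 := by rw [← Real.exp_nat_mul]; norm_num

theorem exists_add_mul_lt_and_mul_le {H : ℝ} (hH : 0 < H) {h : ℕ} (hh : 1 ≤ h) :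
    ∃ N Q : ℕ, N + h * Q < H ∧ N * Q ≤ H ^ 2 / 12 ∧ H / 2 - 1 ≤ N ∧
      H / 2 - (h + 2) ≤ Q * (h + 2) := by
  have ceil_pos : 0 < ⌈H / 2⌉₊ := Nat.ceil_pos.2 (by positivity)
  obtain ⟨N, hN⟩ := Nat.exists_eq_add_of_le' ceil_pos
  have N_lt : (N : ℝ) < H / 2 := Nat.lt_ceil.1 (by omega)
  have le_N : H / 2 ≤ N + 1 := by exact_mod_cast hN ▸ Nat.le_ceil (H / 2)
  obtain ⟨Q, hQ⟩ : ∃ Q : ℕ, Q = ⌊H / 2 / (h + 2)⌋₊ := ⟨_, rfl⟩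
  have Q_le : Q * (h + 2) ≤ H / 2 := by
    rw [← le_div_iff₀ (by positivity), hQ]
    exact Nat.floor_le (by positivity)
  have le_Q : H / 2 ≤ (Q + 1) * (h + 2) := by
    rw [← div_le_iff₀ (by positivity), hQ]
    exact (Nat.lt_floor_add_one _).le
  have one_le_h : (1 : ℝ) ≤ h := by exact_mod_cast hh
  have Q_le_sixth : (Q : ℝ) ≤ H / 6 := by nlinarith [Nat.cast_nonneg (α := ℝ) Q]
  refine ⟨N, Q, by linarith [Nat.cast_nonneg (α := ℝ) Q], ?_, by linarith, by linarith⟩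
  calc (N * Q : ℝ) ≤ H / 2 * (H / 6) := by gcongr
    _ = H ^ 2 / 12 := by ring

theorem mul_le_card_sievedPairs {N Q h u : ℕ} (hu : h + 1 ≤ 0.1063 * (u : ℝ))
    (hN : h ≤ 0.0025 * (N : ℝ)) : 0.22 * (N * Q : ℝ) ≤ (sievedPairs N Q h u).card := by
  have u_pos : (0 : ℝ) < u := by linarith [Nat.cast_nonneg (α := ℝ) h]
  have main := mul_div_three_le_card_sievedPairs_add (Nat.cast_pos.1 u_pos) N Q h
  have loss_eq : (N * Q / u + h * Q * (N / u + 1) : ℝ) = (h + 1) / u * (N * Q) + h * Q := by ring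
  have dvd_loss : (h + 1) / u * (N * Q : ℝ) ≤ 0.1063 * (N * Q) := by
    gcongr
    rwa [div_le_iff₀ u_pos]
  have end_loss : (h * Q : ℝ) ≤ 0.0025 * N * Q := by gcongr
  nlinarith [Nat.cast_nonneg (α := ℝ) N, Nat.cast_nonneg (α := ℝ) Q]

theorem four_mul_mul_pow_lt_card_sievedPairs_mul {P L : ℝ} {N Q h u M : ℕ} (hP : 56 ≤ P)
    (hL : 16 ≤ L) (hhL : h ≤ 0.7214 * L) (hu : 7.38 * L ≤ u) (hN : 5.5 * (P * L) ≤ N)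
    (hQ : 5.4 * (P * L) ≤ Q * (h + 2)) (hM : 0.49 * P ^ 2 ≤ M) :
    4 * h * P ^ 4 < (sievedPairs N Q h u).card * M := by
  have card_ge : 0.22 * (N * Q : ℝ) ≤ (sievedPairs N Q h u).card :=
    mul_le_card_sievedPairs (by linarith) (by nlinarith)
  have h_mul_le : (h * (h + 2) : ℝ) ≤ 0.62 * L ^ 2 := by nlinarith [Nat.cast_nonneg (α := ℝ) h]
  have pos : 0 < L ^ 2 * P ^ 4 := by positivity
  refine lt_of_mul_lt_mul_right (a := (h + 2 : ℝ)) ?_ (by positivity)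
  calc 4 * h * P ^ 4 * (h + 2) = 4 * P ^ 4 * (h * (h + 2)) := by ring
    _ ≤ 4 * P ^ 4 * (0.62 * L ^ 2) := by gcongr
    _ < 0.22 * (5.5 * (P * L) * (5.4 * (P * L))) * (0.49 * P ^ 2) := by linarith
    _ ≤ 0.22 * (N * (Q * (h + 2))) * M := by gcongr
    _ = 0.22 * (N * Q) * M * (h + 2) := by ring
    _ ≤ (sievedPairs N Q h u).card * M * (h + 2) := by gcongr

theorem exists_lt_card_sievedPairs_mul {p h u : ℕ} (hp : 10 ^ 7 ≤ p) (hh : 1 ≤ h)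
    (hhp : h ≤ 0.7214 * Real.log p) (hu : Real.exp 2 * Real.log p ≤ u) :
    ∃ N Q M : ℕ, N + h * Q < 11.0421 * (p : ℝ) ^ ((1 : ℝ) / 4) * Real.log p ∧ N * Q < p ∧
      4 * M ^ 2 ≤ p ∧ 4 * h * p < (sievedPairs N Q h u).card * M := by
  have le_p : (10 : ℝ) ^ 7 ≤ p := by exact_mod_cast hp
  have le_P := fifty_six_le_rpow_one_fourth le_p
  have le_L := sixteen_le_log le_p
  have L_le := log_le_mul_rpow_one_fourth le_p
  have P_pow := rpow_one_fourth_pow_four (Nat.cast_nonneg (α := ℝ) p)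
  set P := (p : ℝ) ^ ((1 : ℝ) / 4)
  set L := Real.log p
  have L_mul_le : 56 * L ≤ P * L := by gcongr
  obtain ⟨N, Q, add_lt, mul_le, le_N, le_Q⟩ :=
    exists_add_mul_lt_and_mul_le (H := 11.0421 * P * L) (by positivity) hh
  have floor_le : (⌊P ^ 2 / 2⌋₊ : ℝ) ≤ P ^ 2 / 2 := Nat.floor_le (by positivity)
  have le_floor := Nat.lt_floor_add_one (P ^ 2 / 2)
  refine ⟨N, Q, ⌊P ^ 2 / 2⌋₊, add_lt, ?_, ?_, ?_⟩ <;> rify <;> rw [← P_pow]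
  · calc (N * Q : ℝ) ≤ (11.0421 * P * L) ^ 2 / 12 := mul_le
      _ ≤ (11.0421 * P * (0.29 * P)) ^ 2 / 12 := by gcongr
      _ < P ^ 4 := by linarith [show 0 < P ^ 4 by positivity]
  · calc 4 * (⌊P ^ 2 / 2⌋₊ : ℝ) ^ 2 ≤ 4 * (P ^ 2 / 2) ^ 2 := by gcongr
      _ = P ^ 4 := by ring
  · exact four_mul_mul_pow_lt_card_sievedPairs_mul le_P le_L hhp
      (le_trans (by gcongr; exact lt_exp_two.le) hu) (by linarith) (by linarith) (by nlinarith)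

end Estimates

theorem second_smallest_nonresidue_10_7_general {p : ℕ} [Fact p.Prime] (hp : 10 ^ 7 ≤ p)
    {R : Type*} [CommMonoidWithZero R] {χ : DirichletCharacter R p} (hχ : χ ≠ 1) {u : ℕ}
    (hu : Real.exp 2 * Real.log p ≤ u) :
    ∃ n : ℕ, 0 < n ∧ ¬ u ∣ n ∧ χ (n : ZMod p) ≠ 1 ∧
      (n : ℝ) < 11.0421 * (p : ℝ) ^ ((1 : ℝ) / 4) * Real.log p := by
  by_contra! hcon
  obtain ⟨k, d, hk, hkd, pow_eq_one⟩ := exists_pow_eq_one_of_mulChar_eq_one hχ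
  rw [ZMod.card] at hkd
  obtain ⟨h, hh, hpk, hkp⟩ := exists_le_four_mul_pow_and_lt hk (show 4 < p by omega)
  obtain ⟨N, Q, M, add_lt, mul_lt, hM, lower⟩ :=
    exists_lt_card_sievedPairs_mul hp hh (natCast_le_mul_log_of_four_mul_pow_lt hk hh hkp) hu
  have natCast_pow_eq_one (n : ℕ) (n_pos : 0 < n) (n_le : n ≤ N + h * Q) (hn : ¬ u ∣ n) :
      (n : ZMod p) ^ d = 1 := by
    refine pow_eq_one _ (by_contra fun hne ↦ ?_)
    have : (n : ℝ) ≤ N + h * Q := by exact_mod_cast n_le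
    linarith [hcon n n_pos hn hne]
  exact lower.not_ge (card_sievedPairs_mul_le (by omega) hk hkd hh hpk hkp hM mul_lt
    natCast_pow_eq_one)

theorem second_smallest_nonresidue_10_7 (p : ℕ) [Fact p.Prime] (hp : (10:ℕ)^7 ≤ p)
    (χ : DirichletCharacter ℂ p) (hχ : χ ≠ 1)
    (u : ℕ) (hu : u.Prime) (hu2 : Real.exp 2 * Real.log p ≤ u) :
    ∃ n : ℕ, 0 < n ∧ Nat.gcd n u = 1 ∧ χ (n : ZMod p) ≠ 1 ∧
      (n : ℝ) < 11.0421 * (p : ℝ) ^ ((1:ℝ)/4) * Real.log p := by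
  obtain ⟨n, n_pos, not_dvd, hn⟩ := second_smallest_nonresidue_10_7_general hp hχ hu2
  exact ⟨n, n_pos, (hu.coprime_iff_not_dvd.2 not_dvd).symm, hn⟩
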